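/- Let n, d be positive integers, Φ a real n×d matrix, y ∈ ℝⁿ, λ > 0, P = I_n − (1/n)1ₙ1ₙᵀ, ȳ = (1/n)1ₙᵀy, K = ΦΦᵀ, K_c = PKP, and α* = ΦᵀP(K_c + λI_n)⁻¹(y − ȳ1ₙ), α₀* = ȳ − (1/n)1ₙᵀΦα*. Then for every φₛ ∈ ℝᵈ, writing κ(s) = Φφₛ and κ_c(s) = Pκ(s) − (1/n)PK1ₙ, the CKRR prediction satisfies α₀* + φₛᵀα* = κ_c(s)ᵀ(K_c + λI_n)⁻¹Py + ȳ. -/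

import Mathlib

/-!
The centered response is `y − ȳ1 = Py`, so both sides involve the same vector
`w = (K_c + λI)⁻¹Py`. For an arbitrary `w` the identity
`φₛᵀΦᵀPw − (1/n)1ᵀΦΦᵀPw = (PΦφₛ − (1/n)PK1)ᵀw` follows by moving the symmetric matrices `P`
and `K = ΦΦᵀ` across the dot product. No property of the inverse matrix enters.
-/

open Matrix

theorem mulVec_dotProduct_eq {m n : Type*} [Fintype m] [Fintype n]
    (A : Matrix m n ℝ) (a : n → ℝ) (w : m → ℝ) :
    (A *ᵥ a) ⬝ᵥ w = a ⬝ᵥ (Aᵀ *ᵥ w) := by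
  rw [dotProduct_mulVec, vecMul_transpose]

/-- The CKRR prediction in kernel form: with `K = ΦΦᵀ`, `K_c = PKP`,
`α* = ΦᵀP(K_c + λI)⁻¹(y − ȳ1)`, `α₀* = ȳ − (1/n)1ᵀΦα*`, `κ(s) = Φφₛ` and
`κ_c(s) = Pκ(s) − (1/n)PK1`, one has
`α₀* + φₛᵀα* = κ_c(s)ᵀ(K_c + λI)⁻¹Py + ȳ`. -/
theorem ckrr_prediction (n d : ℕ) (hn : 0 < n) (hd : 0 < d)
    (Φ : Matrix (Fin n) (Fin d) ℝ) (y : Fin n → ℝ) (lam : ℝ) (hlam : 0 < lam) :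
    let ones : Fin n → ℝ := fun _ => 1
    let P : Matrix (Fin n) (Fin n) ℝ := 1 - (n : ℝ)⁻¹ • Matrix.of fun _ _ => (1 : ℝ)
    let ybar : ℝ := (n : ℝ)⁻¹ * ∑ i, y i
    let K : Matrix (Fin n) (Fin n) ℝ := Φ * Φᵀ
    let Kc : Matrix (Fin n) (Fin n) ℝ := P * K * P
    let αstar : Fin d → ℝ :=
      Φᵀ *ᵥ (P *ᵥ ((Kc + lam • (1 : Matrix (Fin n) (Fin n) ℝ))⁻¹ *ᵥ (y - ybar • ones)))
    let α0star : ℝ := ybar - (n : ℝ)⁻¹ * ∑ i, (Φ *ᵥ αstar) i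
    ∀ φs : Fin d → ℝ,
      let κ : Fin n → ℝ := Φ *ᵥ φs
      let κc : Fin n → ℝ := P *ᵥ κ - (n : ℝ)⁻¹ • (P *ᵥ (K *ᵥ ones))
      α0star + φs ⬝ᵥ αstar =
        κc ⬝ᵥ ((Kc + lam • (1 : Matrix (Fin n) (Fin n) ℝ))⁻¹ *ᵥ (P *ᵥ y)) + ybar := by
  intro ones P ybar K Kc αstar α0star φs κ κc
  have hP : Pᵀ = P := by
    ext i j
    simp [P, Matrix.one_apply, eq_comm]
  have hK : Kᵀ = K := by simp [K]
  have hy : y - ybar • ones = P *ᵥ y := by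
    ext i
    simp [P, ybar, ones, mulVec, dotProduct, sub_mul, Finset.sum_sub_distrib, Finset.mul_sum,
      Matrix.one_apply]
  have hsum : ∑ i, (Φ *ᵥ αstar) i = ones ⬝ᵥ (Φ *ᵥ αstar) := by
    simp [ones, dotProduct]
  simp only [α0star, κc]
  rw [hsum]
  simp only [αstar, hy]
  generalize (Kc + lam • (1 : Matrix (Fin n) (Fin n) ℝ))⁻¹ *ᵥ (P *ᵥ y) = w
  rw [sub_dotProduct, smul_dotProduct, mulVec_dotProduct_eq P κ,
    mulVec_dotProduct_eq P (K *ᵥ ones), hP, mulVec_dotProduct_eq K, hK,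
    mulVec_dotProduct_eq Φ φs, mulVec_mulVec (P *ᵥ w) Φ Φᵀ, smul_eq_mul]
  simp only [K]
  ring
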